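/- Let C1 ⊆ F_{q^m}^n be a linear code and C2 ⊊ C1 a subcode with dim C2 = dim C1 − l. Equip Ω = C1 with the uniform probability measure, let X : Ω → F_{q^m}^n be the identity map, and let S : Ω → C1/C2 be the quotient map x ↦ x + C2 (so X is conditionally uniform on each coset given S, and S is uniform on C1/C2). Fix a matrix B ∈ F_{q^m}^{μ×n} and let W = X B^T ∈ F_{q^m}^μ. Then the mutual information (in nats) satisfies I(S ; W) = ( dim(C2^⊥ ∩ row(B)) − dim(C1^⊥ ∩ row(B)) ) · m · log q, where row(B) ⊆ F_{q^m}^n denotes the F_{q^m}-row space of B and dim denotes dimension over F_{q^m}. -/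

import Mathlib

open scoped BigOperators

noncomputable section

variable (q : ℕ) (Fq : Type*) {Fqm : Type*} [Field Fq] [Field Fqm] [Algebra Fq Fqm]

/-- `V = V^q`: the image of `V` under the coordinatewise `q`-th power map equals `V`
(membership in the family `Γ(F_{q^m}^n)`). -/
def IsGalClosed {n : ℕ} (V : Submodule Fqm (Fin n → Fqm)) : Prop :=
  (fun v : Fin n → Fqm => fun i => v i ^ q) '' (V : Set (Fin n → Fqm)) =
    (V : Set (Fin n → Fqm))

/-- The `i`-th relative dimension/intersection profile (RDIP) of `C1` and `C2`. -/
noncomputable def RDIP {n : ℕ} (C1 C2 : Submodule Fqm (Fin n → Fqm)) (i : ℕ) : ℕ :=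
  sSup {d : ℕ | ∃ V : Submodule Fqm (Fin n → Fqm), IsGalClosed q V ∧
    Module.finrank Fqm ↥V = i ∧
    d = Module.finrank Fqm ↥(C1 ⊓ V) - Module.finrank Fqm ↥(C2 ⊓ V)}

/-- The `i`-th relative generalized rank weight (RGRW) of `C1` and `C2`. -/
noncomputable def RGRW {n : ℕ} (C1 C2 : Submodule Fqm (Fin n → Fqm)) (i : ℕ) : ℕ :=
  sInf {d : ℕ | ∃ V : Submodule Fqm (Fin n → Fqm), IsGalClosed q V ∧
    d = Module.finrank Fqm ↥V ∧
    i ≤ Module.finrank Fqm ↥(C1 ⊓ V) - Module.finrank Fqm ↥(C2 ⊓ V)}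

/-- The rank weight `d_R(x,0)` of a vector: the `F_q`-dimension of the `F_q`-span of
its coordinates. -/
noncomputable def rankWeight {ι : Type*} (x : ι → Fqm) : ℕ :=
  Module.finrank Fq ↥(Submodule.span Fq (Set.range x))

/-- The minimum rank distance of a (nonzero) linear code. -/
noncomputable def minRankDist {ι : Type*} (C : Submodule Fqm (ι → Fqm)) : ℕ :=
  sInf {d : ℕ | ∃ x, x ∈ C ∧ x ≠ 0 ∧ d = rankWeight Fq x}

/-- The dual code with respect to the standard bilinear form `⟨x,y⟩ = ∑ i, x i * y i`. -/
def dualCode {n : ℕ} (V : Submodule Fqm (Fin n → Fqm)) : Submodule Fqm (Fin n → Fqm) where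
  carrier := {x | ∀ v ∈ V, ∑ i, x i * v i = 0}
  add_mem' := by
    intro a b ha hb v hv
    have h1 := ha v hv
    have h2 := hb v hv
    simp only [Set.mem_setOf_eq] at *
    simp only [Pi.add_apply, add_mul]
    rw [Finset.sum_add_distrib, h1, h2, add_zero]
  zero_mem' := by
    intro v hv
    simp
  smul_mem' := by
    intro c x hx v hv
    have h := hx v hv
    simp only [Set.mem_setOf_eq] at *
    simp only [Pi.smul_apply, smul_eq_mul, mul_assoc]
    rw [← Finset.mul_sum, h, mul_zero]


/-- Shannon entropy (in nats) of a random variable `f` on a finite probability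
space `Ω` equipped with the uniform measure:
`H(f) = - ∑_a P(f = a) log P(f = a) = - ∑_ω (1/|Ω|) log P(f = f ω)`. -/
noncomputable def unifEntropy {Ω : Type*} [Fintype Ω] {α : Type*} (f : Ω → α) : ℝ := by
  classical
  exact - ∑ ω : Ω, (1 / (Fintype.card Ω : ℝ)) *
      Real.log (((Finset.univ.filter fun ω' => f ω' = f ω).card : ℝ) /
        (Fintype.card Ω : ℝ))

/-- Mutual information (in nats) `I(f;g) = H(f) + H(g) - H(f,g)` of two random
variables on a finite probability space with the uniform measure. -/
noncomputable def unifMutualInfo {Ω : Type*} [Fintype Ω] {α β : Type*}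
    (f : Ω → α) (g : Ω → β) : ℝ :=
  unifEntropy f + unifEntropy g - unifEntropy fun ω => (f ω, g ω)

/-!
Writing `T x = x Bᵀ`, the observation `W` is uniform on `T C1`, and given `S` it is uniform on a
coset of `T C2`, so `I(S; W)` is `dim (T C1) - dim (T C2)` in units of `log |F_{q^m}|`. The pairing
`C × row B → F_{q^m}` has the same rank seen from either side; seen from `C` this rank is
`dim (T C)`, seen from `row B` it is `dim (row B) - dim (C^⊥ ∩ row B)`, and `dim (row B)` cancels.
-/

section Entropy

open Module (finrank)

variable {Ω α G H H' F M N N' : Type*}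

theorem unifEntropy_of_card_fiber [Fintype Ω] [Nonempty Ω] {f : Ω → α} {c : ℕ}
    (hf : ∀ ω, Nat.card (f ⁻¹' {f ω}) = c) :
    unifEntropy f = Real.log (Nat.card Ω / c) := by
  classical
  have hfiber (ω : Ω) : (Finset.univ.filter fun ω' => f ω' = f ω).card = c := by
    rw [← hf ω]
    exact (Nat.subtype_card _ (by simp)).symm
  have hΩ : (Fintype.card Ω : ℝ) ≠ 0 := Nat.cast_ne_zero.2 Fintype.card_ne_zero
  calc unifEntropy f
      = -∑ _ω : Ω, 1 / (Fintype.card Ω : ℝ) * Real.log (c / Fintype.card Ω) := by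
        unfold unifEntropy
        congr! with ω
        exact hfiber ω
    _ = -Real.log (c / Fintype.card Ω) := by
        rw [Finset.sum_const, Finset.card_univ, nsmul_eq_mul, ← mul_assoc,
          mul_one_div_cancel hΩ, one_mul]
    _ = Real.log (Nat.card Ω / c) := by
        rw [← Real.log_inv, inv_div, Nat.card_eq_fintype_card]

variable [AddGroup G] [Fintype G]

theorem unifEntropy_addMonoidHom [AddGroup H] (f : G →+ H) :
    unifEntropy f = Real.log f.ker.index := by
  have hker : (Nat.card f.ker : ℝ) ≠ 0 := Nat.cast_ne_zero.2 Nat.card_pos.ne'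
  rw [unifEntropy_of_card_fiber fun x => Nat.card_congr (f.fiberEquivKer x),
    ← f.ker.card_mul_index, Nat.cast_mul, mul_div_cancel_left₀ _ hker]

-- This is the chain rule `I(f; g) = H(g) - H(g | f)`: given `f`, the value of `g` is uniform on a
-- coset of `g (ker f)`.
theorem unifMutualInfo_addMonoidHom [AddGroup H] [AddGroup H'] (f : G →+ H) (g : G →+ H') :
    unifMutualInfo f g =
      Real.log (Nat.card g.range) - Real.log (Nat.card (f.ker.map g)) := by
  have hindex : (f.prod g).ker.index = Nat.card (f.ker.map g) * f.ker.index := by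
    rw [AddMonoidHom.ker_prod, ← AddSubgroup.relIndex_mul_index inf_le_left,
      AddSubgroup.inf_relIndex_left, AddSubgroup.relIndex_ker]
  have hfinite : Finite (f.ker.map g) := ((f.ker : Set G).toFinite.image g).to_subtype
  have hpair : unifEntropy (fun x => (f x, g x)) =
      Real.log (Nat.card (f.ker.map g)) + Real.log f.ker.index := by
    rw [← Real.log_mul (Nat.cast_ne_zero.2 Nat.card_pos.ne')
      (Nat.cast_ne_zero.2 AddSubgroup.index_ne_zero_of_finite), ← Nat.cast_mul, ← hindex]
    exact unifEntropy_addMonoidHom (f.prod g)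
  rw [unifMutualInfo, hpair, unifEntropy_addMonoidHom, unifEntropy_addMonoidHom,
    AddSubgroup.index_ker g]
  ring

theorem log_natCard_eq_finrank_mul_log [DivisionRing F] [AddCommGroup M] [Module F M]
    [Module.Finite F M] :
    Real.log (Nat.card M) = finrank F M * Real.log (Nat.card F) := by
  rw [Module.natCard_eq_pow_finrank (K := F), Nat.cast_pow, Real.log_pow]

theorem unifMutualInfo_linearMap [DivisionRing F] [AddCommGroup M] [Module F M] [Fintype M]
    [AddCommGroup N] [Module F N] [AddCommGroup N'] [Module F N']
    (f : M →ₗ[F] N) (g : M →ₗ[F] N') :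
    unifMutualInfo f g =
      ((finrank F (LinearMap.range g) : ℝ) -
          finrank F ((LinearMap.ker f).map g)) * Real.log (Nat.card F) := by
  rw [sub_mul, ← log_natCard_eq_finrank_mul_log, ← log_natCard_eq_finrank_mul_log]
  exact unifMutualInfo_addMonoidHom f.toAddMonoidHom g.toAddMonoidHom

end Entropy

section Duality

open Module (finrank)

variable {F V W ι : Type*} [Field F] [AddCommGroup V] [Module F V] [AddCommGroup W] [Module F W]
  {n : ℕ}

theorem finrank_range_flip [FiniteDimensional F W] (p : V →ₗ[F] W →ₗ[F] F) :
    finrank F (LinearMap.range p.flip) = finrank F (LinearMap.range p) := by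
  have hflip : p.flip = p.dualMap ∘ₗ Module.Dual.eval F W := rfl
  rw [hflip, LinearMap.range_comp_of_range_eq_top _ (Module.erange_coe F W),
    LinearMap.finrank_range_dualMap_eq_finrank_range]

theorem finrank_map_add_finrank_inf_ker {K U U' : Type*} [DivisionRing K] [AddCommGroup U]
    [Module K U] [AddCommGroup U'] [Module K U'] (f : U →ₗ[K] U') (C : Submodule K U)
    [FiniteDimensional K C] :
    finrank K (C.map f) + finrank K ↥(C ⊓ LinearMap.ker f) = finrank K C := by
  rw [← (f.domRestrict C).finrank_range_add_finrank_ker, LinearMap.range_domRestrict,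
    LinearMap.ker_domRestrict, ← Submodule.map_comap_subtype, Submodule.finrank_map_subtype_eq]

-- The rank of the pairing `C × R → F` is `dim C - dim (C ∩ R^⊥)` and also `dim R - dim (C^⊥ ∩ R)`.
theorem finrank_inf_dualCode_add_finrank (C R : Submodule F (Fin n → F)) :
    finrank F ↥(C ⊓ dualCode R) + finrank F R =
      finrank F ↥(dualCode C ⊓ R) + finrank F C := by
  let p := (dotProductBilin F F : (Fin n → F) →ₗ[F] _).domRestrict₁₂ C R
  have hker : LinearMap.ker p = (dualCode R).comap C.subtype := by
    ext x
    simp only [LinearMap.mem_ker, LinearMap.ext_iff, Subtype.forall]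
    rfl
  have hker_flip : LinearMap.ker p.flip = (dualCode C).comap R.subtype := by
    ext y
    simp only [LinearMap.mem_ker, LinearMap.ext_iff, Subtype.forall]
    exact forall₂_congr fun x _ => by
      rw [LinearMap.flip_apply, LinearMap.zero_apply]
      exact (dotProduct_comm x y).congr_left
  have hp := p.finrank_range_add_finrank_ker
  have hp_flip := p.flip.finrank_range_add_finrank_ker
  rw [hker, ← Submodule.finrank_map_subtype_eq, Submodule.map_comap_subtype] at hp
  rw [hker_flip, finrank_range_flip, ← Submodule.finrank_map_subtype_eq,
    Submodule.map_comap_subtype, inf_comm] at hp_flip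
  omega

theorem ker_vecMulLinear_transpose (B : ι → Fin n → F) :
    LinearMap.ker (Matrix.of B).transpose.vecMulLinear =
      dualCode (Submodule.span F (Set.range B)) := by
  ext x
  have hrow : (∀ j, x ⬝ᵥ B j = 0) ↔ Set.range B ⊆ LinearMap.ker (dotProductBilin F F x) := by
    rw [Set.range_subset_iff]
    rfl
  exact funext_iff.trans (hrow.trans Submodule.span_le.symm)

theorem finrank_map_vecMulLinear_transpose_add (B : ι → Fin n → F)
    (C : Submodule F (Fin n → F)) :
    finrank F (C.map (Matrix.of B).transpose.vecMulLinear) +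
        finrank F ↥(dualCode C ⊓ Submodule.span F (Set.range B)) =
      finrank F (Submodule.span F (Set.range B)) := by
  have hC := finrank_map_add_finrank_inf_ker (Matrix.of B).transpose.vecMulLinear C
  rw [ker_vecMulLinear_transpose] at hC
  have hdual := finrank_inf_dualCode_add_finrank C (Submodule.span F (Set.range B))
  omega

end Duality

theorem stmt13_general {F ι : Type*} [Field F] {n : ℕ} {C1 C2 : Submodule F (Fin n → F)}
    [Fintype ↥C1] (h : C2 ≤ C1) (B : ι → Fin n → F) :
    unifMutualInfo
        (fun x : ↥C1 => (Submodule.Quotient.mk x : ↥C1 ⧸ C2.comap C1.subtype))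
        (fun x : ↥C1 => fun j : ι => ∑ i, (x : Fin n → F) i * B j i) =
      ((Module.finrank F ↥(dualCode C2 ⊓ Submodule.span F (Set.range B)) : ℝ) -
          (Module.finrank F ↥(dualCode C1 ⊓ Submodule.span F (Set.range B)) : ℝ)) *
        Real.log (Nat.card F) := by
  let T := (Matrix.of B).transpose.vecMulLinear
  have hinfo : unifMutualInfo (C2.comap C1.subtype).mkQ (T.domRestrict C1) =
      ((Module.finrank F (C1.map T) : ℝ) - Module.finrank F (C2.map T)) *
        Real.log (Nat.card F) := by
    rw [unifMutualInfo_linearMap, LinearMap.range_domRestrict, Submodule.ker_mkQ,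
      LinearMap.domRestrict, Submodule.map_comp, Submodule.map_comap_subtype, inf_eq_right.2 h]
  have hrank (C : Submodule F (Fin n → F)) : (Module.finrank F (C.map T) : ℝ) =
      Module.finrank F (Submodule.span F (Set.range B)) -
        Module.finrank F ↥(dualCode C ⊓ Submodule.span F (Set.range B)) :=
    eq_sub_of_add_eq (mod_cast finrank_map_vecMulLinear_transpose_add B C)
  rw [hrank, hrank, sub_sub_sub_cancel_left] at hinfo
  exact hinfo

/-- With `Ω = C1` uniform, `X` the identity, `S : C1 → C1/C2` the
quotient map, and `B ∈ F_{q^m}^{μ×n}`, setting `W = X Bᵀ`, the mutual information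
satisfies `I(S;W) = (dim(C2^⊥ ∩ row(B)) - dim(C1^⊥ ∩ row(B))) · m · log q` in nats. -/
theorem stmt13 (m n l μ : ℕ) [Fintype Fq] [Fintype Fqm]
    (hq : Fintype.card Fq = q) (hm : Module.finrank Fq Fqm = m)
    (C1 C2 : Submodule Fqm (Fin n → Fqm)) [Fintype ↥C1] (h12 : C2 < C1)
    (hl : Module.finrank Fqm ↥C1 = Module.finrank Fqm ↥C2 + l)
    (B : Fin μ → Fin n → Fqm) :
    unifMutualInfo
        (fun x : ↥C1 => (Submodule.Quotient.mk x : ↥C1 ⧸ C2.comap C1.subtype))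
        (fun x : ↥C1 => fun j : Fin μ => ∑ i, (x : Fin n → Fqm) i * B j i) =
      ((Module.finrank Fqm ↥(dualCode C2 ⊓ Submodule.span Fqm (Set.range B)) : ℝ) -
          (Module.finrank Fqm ↥(dualCode C1 ⊓ Submodule.span Fqm (Set.range B)) : ℝ)) *
        ((m : ℝ) * Real.log (q : ℝ)) := by
  rw [stmt13_general h12.le B, log_natCard_eq_finrank_mul_log (F := Fq), Nat.card_eq_fintype_card,
    hq, hm]

end
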